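/- arXiv:2503.24013 — 2 statements merged into one kernel-verified Lean document; each statement's English description precedes it below -/
import Mathlib

section
/- Let X and Y be nonempty finite types and let P : X × Y → ℝ be a joint distribution. Assume P is non-deterministic, i.e., there exists x with P_X(x) > 0 such that the conditional pmf P(·|x) is not a point mass (equivalently, the conditional Shannon entropy H[Y|X] is strictly positive). Then no distortion function Δ : X × Y × Y → ℝ is stably distribution preserving at P. That is, for every Δ and every ε > 0 there exists a joint distribution P̃ with TV(P, P̃) ≤ ε such that some kernel Q* minimizing the expected distortion 𝔇(·; P̃) has output marginal under P̃_X different from P̃_Y. -/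
open Finset

variable {X Y : Type*} [Fintype X] [Fintype Y]

/-- `P : X × Y → ℝ` is a joint probability distribution. -/
def IsJointDist (P : X × Y → ℝ) : Prop :=
  (∀ p, 0 ≤ P p) ∧ ∑ p : X × Y, P p = 1

/-- `q : Y → ℝ` is a probability mass function. -/
def IsPMF {Z : Type*} [Fintype Z] (q : Z → ℝ) : Prop :=
  (∀ z, 0 ≤ q z) ∧ ∑ z : Z, q z = 1

/-- `q` is a point mass: it assigns probability 1 to a single element. -/
def IsPointMass {Z : Type*} [Fintype Z] [DecidableEq Z] (q : Z → ℝ) : Prop :=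
  ∃ z₀, ∀ z, q z = if z = z₀ then 1 else 0

/-- The X-marginal of a joint distribution. -/
def margX (P : X × Y → ℝ) (x : X) : ℝ := ∑ y : Y, P (x, y)

/-- The Y-marginal of a joint distribution. -/
def margY (P : X × Y → ℝ) (y : Y) : ℝ := ∑ x : X, P (x, y)

/-- The conditional pmf `P(· | x)`. -/
noncomputable def condY (P : X × Y → ℝ) (x : X) (y : Y) : ℝ := P (x, y) / margX P x

/-- `Q : X → Y → ℝ` is a (Markov) kernel: each `Q x` is a pmf on `Y`. -/
def IsKernel (Q : X → Y → ℝ) : Prop := ∀ x, IsPMF (Q x)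

/-- The expected distortion of the kernel `Q` under the joint distribution `P`:
`𝔇(Q; P) = Σ_{x,y} P(x,y) · Σ_{y'} Q(x)(y') · Δ(x,y,y')`. -/
def expDist (Δ : X → Y → Y → ℝ) (Q : X → Y → ℝ) (P : X × Y → ℝ) : ℝ :=
  ∑ x : X, ∑ y : Y, P (x, y) * ∑ y' : Y, Q x y' * Δ x y y'

/-- The output marginal of the kernel `Q` under the input pmf `μ`. -/
def outMarg (Q : X → Y → ℝ) (μ : X → ℝ) (y' : Y) : ℝ := ∑ x : X, μ x * Q x y'

/-- Total variation distance between two pmfs on a finite type. -/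
noncomputable def TVdist {Z : Type*} [Fintype Z] (p q : Z → ℝ) : ℝ := (1 / 2) * ∑ z : Z, |p z - q z|

/-- `Q` minimizes the expected distortion `𝔇(·; P)` over all kernels. -/
def MinimizesExpDist (Δ : X → Y → Y → ℝ) (Q : X → Y → ℝ) (P : X × Y → ℝ) : Prop :=
  IsKernel Q ∧ ∀ Q', IsKernel Q' → expDist Δ Q P ≤ expDist Δ Q' P

/-- `Δ` is distribution preserving at the joint distribution `P`: every kernel
minimizing the expected distortion has output marginal (under `P`'s X-marginal)
equal to `P`'s Y-marginal. -/
def DistPreserving (Δ : X → Y → Y → ℝ) (P : X × Y → ℝ) : Prop :=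
  ∀ Q, MinimizesExpDist Δ Q P → outMarg Q (margX P) = margY P

/-- `Δ` is stably distribution preserving at `P`: it is distribution preserving
at every joint distribution in some TV `ε`-ball around `P`. -/
def StablyDistPreserving (Δ : X → Y → Y → ℝ) (P : X × Y → ℝ) : Prop :=
  ∃ ε > 0, ∀ P' : X × Y → ℝ, IsJointDist P' → TVdist P P' ≤ ε → DistPreserving Δ P'

/-!
Among the minimizers of the expected distortion there is always a deterministic one, obtained by
answering each `x` with a cheapest `y'`. There are only finitely many maps `X → Y`, so for a fixed
`X`-marginal only finitely many `Y`-marginals are compatible with distribution preservation. Moving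
a small mass `t` from `(x, b)` to `(x, a)`, `a ≠ b`, keeps the `X`-marginal but produces a different
`Y`-marginal for each `t`, hence infinitely many in every neighbourhood of `P`.
-/

section PMF

variable {Z : Type*} [Fintype Z] {q : Z → ℝ}

theorem IsPMF.exists_pos (hq : IsPMF q) : ∃ z, 0 < q z := by
  by_contra! h
  linarith [hq.2, sum_nonpos fun z (_ : z ∈ univ) => h z]

theorem IsPMF.nontrivial_of_not_isPointMass [DecidableEq Z] (hq : IsPMF q)
    (hnp : ¬ IsPointMass q) : Nontrivial Z := by
  refine not_subsingleton_iff_nontrivial.1 fun _ => hnp ?_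
  obtain ⟨z₀, -⟩ := hq.exists_pos
  refine ⟨z₀, fun z => ?_⟩
  rw [if_pos (Subsingleton.elim z z₀), ← hq.2, Fintype.sum_subsingleton q z]

theorem IsPMF.le_sum_mul (hq : IsPMF q) {c : Z → ℝ} {m : ℝ} (hm : ∀ z, m ≤ c z) :
    m ≤ ∑ z, q z * c z :=
  calc m = ∑ z, q z * m := by rw [← sum_mul, hq.2, one_mul]
    _ ≤ ∑ z, q z * c z := sum_le_sum fun z _ => mul_le_mul_of_nonneg_left (hm z) (hq.1 z)

theorem isPMF_single [DecidableEq Z] (z : Z) : IsPMF (Pi.single z 1) :=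
  have hnonneg : (0 : Z → ℝ) ≤ Pi.single z 1 := Pi.single_nonneg.2 zero_le_one
  ⟨hnonneg, by simp⟩

end PMF

theorem isPMF_condY {P : X × Y → ℝ} (hP : IsJointDist P) {x : X} (hx : 0 < margX P x) :
    IsPMF (condY P x) := by
  refine ⟨fun y => div_nonneg (hP.1 _) hx.le, ?_⟩
  calc ∑ y, condY P x y = margX P x / margX P x := (sum_div univ _ _).symm
    _ = 1 := div_self hx.ne'

section TransferMass

/-- The perturbation of `P` that moves the mass `t` from `p` to `q`. The definition imposes no sign
or size condition on `t`, so the result need not be nonnegative. -/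
def transferMass {Z : Type*} [DecidableEq Z] (P : Z → ℝ) (p q : Z) (t : ℝ) : Z → ℝ :=
  P + (Pi.single q t - Pi.single p t)

variable {Z : Type*} [DecidableEq Z] {P : Z → ℝ} {p q : Z} {t : ℝ}

@[simp]
theorem transferMass_self : transferMass P p p t = P := by
  simp [transferMass]

theorem transferMass_injective (P : Z → ℝ) (hpq : p ≠ q) :
    Function.Injective (transferMass P p q) := fun s t hst => by
  simpa [transferMass, hpq.symm] using congrFun hst q

theorem isPMF_transferMass [Fintype Z] (hP : IsPMF P) (ht : 0 ≤ t) (htp : t ≤ P p) :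
    IsPMF (transferMass P p q t) := by
  refine ⟨fun z => ?_, by simp [transferMass, sum_add_distrib, hP.2]⟩
  have hPz : (Pi.single p t : Z → ℝ) z ≤ P z := by
    rcases eq_or_ne z p with rfl | hz
    · simpa using htp
    · simpa [hz] using hP.1 z
  have hq : (0 : Z → ℝ) ≤ Pi.single q t := Pi.single_nonneg.2 ht
  calc 0 ≤ (Pi.single q t : Z → ℝ) z + (P z - (Pi.single p t : Z → ℝ) z) :=
        add_nonneg (hq z) (sub_nonneg.2 hPz)
    _ = transferMass P p q t z := by simp only [transferMass, Pi.add_apply, Pi.sub_apply]; ring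

theorem TVdist_transferMass_le [Fintype Z] (P : Z → ℝ) (p q : Z) (t : ℝ) :
    TVdist P (transferMass P p q t) ≤ |t| := by
  have hsum (r : Z) : ∑ z, |(Pi.single r t : Z → ℝ) z| = |t| := by
    simp [Pi.single_apply, apply_ite abs]
  calc TVdist P (transferMass P p q t)
      = 1 / 2 * ∑ z, |(Pi.single p t : Z → ℝ) z - (Pi.single q t : Z → ℝ) z| := by
        simp [TVdist, transferMass]
    _ ≤ 1 / 2 * ∑ z, (|(Pi.single p t : Z → ℝ) z| + |(Pi.single q t : Z → ℝ) z|) := by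
        gcongr
        exact abs_sub _ _
    _ = |t| := by rw [sum_add_distrib, hsum, hsum]; ring

end TransferMass

section Marginals

variable [DecidableEq X] [DecidableEq Y] (P : X × Y → ℝ) (p q : X × Y) (t : ℝ)

omit [Fintype X] in
theorem margX_transferMass :
    margX (transferMass P p q t) = transferMass (margX P) p.1 q.1 t := by
  ext x
  simp [margX, transferMass, Pi.single_apply, Prod.ext_iff, ite_and, sum_add_distrib]

omit [Fintype Y] in
theorem margY_transferMass :
    margY (transferMass P p q t) = transferMass (margY P) p.2 q.2 t := by
  ext y
  simp [margY, transferMass, Pi.single_apply, Prod.ext_iff, ite_and, sum_add_distrib]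

end Marginals

section DeterministicMinimizer

/-- The kernel of a deterministic map `f`. -/
def detKernel [DecidableEq Y] (f : X → Y) (x : X) : Y → ℝ := Pi.single (f x) 1

/-- The contribution of the input `x` to the expected distortion when it is answered by `y'`. It is
weighted by the joint mass and not by `P(· | x)`, so no division by `P_X(x)` occurs. -/
def pointCost (Δ : X → Y → Y → ℝ) (P : X × Y → ℝ) (x : X) (y' : Y) : ℝ :=
  ∑ y, P (x, y) * Δ x y y'

theorem expDist_eq_sum_pointCost (Δ : X → Y → Y → ℝ) (Q : X → Y → ℝ) (P : X × Y → ℝ) :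
    expDist Δ Q P = ∑ x, ∑ y', Q x y' * pointCost Δ P x y' := by
  simp only [expDist, pointCost, mul_sum, mul_left_comm]
  exact sum_congr rfl fun x _ => sum_comm

variable [DecidableEq Y]

omit [Fintype X] in
theorem isKernel_detKernel (f : X → Y) : IsKernel (detKernel f) := fun x =>
  isPMF_single (f x)

theorem expDist_detKernel (Δ : X → Y → Y → ℝ) (f : X → Y) (P : X × Y → ℝ) :
    expDist Δ (detKernel f) P = ∑ x, pointCost Δ P x (f x) := by
  simp [expDist_eq_sum_pointCost, detKernel, Pi.single_apply]

theorem exists_minimizesExpDist_detKernel [Nonempty Y] (Δ : X → Y → Y → ℝ) (P : X × Y → ℝ) :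
    ∃ f : X → Y, MinimizesExpDist Δ (detKernel f) P := by
  choose f hf using fun x => Finite.exists_min (pointCost Δ P x)
  refine ⟨f, isKernel_detKernel f, fun Q hQ => ?_⟩
  rw [expDist_detKernel, expDist_eq_sum_pointCost]
  exact sum_le_sum fun x _ => (hQ x).le_sum_mul (hf x)

theorem DistPreserving.margY_mem_range [Nonempty Y] {Δ : X → Y → Y → ℝ} {P : X × Y → ℝ}
    (hΔ : DistPreserving Δ P) :
    margY P ∈ Set.range fun f : X → Y => outMarg (detKernel f) (margX P) := by
  obtain ⟨f, hf⟩ := exists_minimizesExpDist_detKernel Δ P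
  exact ⟨f, hΔ _ hf⟩

end DeterministicMinimizer

theorem no_two_birds_general [Nontrivial Y] {P : X × Y → ℝ} (hP : IsJointDist P)
    (Δ : X → Y → Y → ℝ) : ¬ StablyDistPreserving Δ P := by
  classical
  rintro ⟨ε, hε, hΔ⟩
  obtain ⟨⟨x, b⟩, hb⟩ := IsPMF.exists_pos hP
  obtain ⟨a, hab⟩ := exists_ne b
  have hmaps : Set.MapsTo (transferMass (margY P) b a) (Set.Icc 0 (min ε (P (x, b))))
      (Set.range fun f : X → Y => outMarg (detKernel f) (margX P)) := by
    rintro t ⟨ht₀, ht⟩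
    have hjoint : IsJointDist (transferMass P (x, b) (x, a) t) :=
      isPMF_transferMass hP ht₀ (ht.trans (min_le_right _ _))
    have hTV : TVdist P (transferMass P (x, b) (x, a) t) ≤ ε :=
      (TVdist_transferMass_le P _ _ t).trans
        ((abs_of_nonneg ht₀).trans_le (ht.trans (min_le_left _ _)))
    simpa only [margX_transferMass, margY_transferMass, transferMass_self] using
      (hΔ _ hjoint hTV).margY_mem_range
  exact Set.Icc_infinite (lt_min hε hb) <|
    Set.Finite.of_injOn hmaps (transferMass_injective _ hab.symm).injOn (Set.finite_range _)

/-- The "no-two-birds" theorem: if the joint distribution `P` is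
non-deterministic (some positive-probability input has a non-point-mass
conditional), then no distortion function is stably distribution preserving at
`P`: for every `Δ` and every `ε > 0` there is a joint distribution `P'` within
TV distance `ε` of `P` at which some minimizer of the expected distortion fails
to be distribution preserving. -/
theorem no_two_birds [DecidableEq Y] [Nonempty X] [Nonempty Y]
    (P : X × Y → ℝ) (hP : IsJointDist P)
    (hnondet : ∃ x, 0 < margX P x ∧ ¬ IsPointMass (condY P x)) :
    ∀ Δ : X → Y → Y → ℝ, ∀ ε : ℝ, 0 < ε →
      ∃ P' : X × Y → ℝ, IsJointDist P' ∧ TVdist P P' ≤ ε ∧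
        ∃ Q : X → Y → ℝ, MinimizesExpDist Δ Q P' ∧
          outMarg Q (margX P') ≠ margY P' := by
  intro Δ ε hε
  obtain ⟨x, hx, hnp⟩ := hnondet
  have : Nontrivial Y := (isPMF_condY hP hx).nontrivial_of_not_isPointMass hnp
  by_contra! h
  exact no_two_birds_general hP Δ ⟨ε, hε, h⟩
end

section
/- Let γ denote the standard Gaussian measure on ℝ (mean 0, variance 1), Φ its cumulative distribution function, and let a, b, m₁, m₂ be real numbers. Set h = m₁/√(1 + a²), k = m₂/√(1 + b²), and ρ = (a·b)/(√(1 + a²)·√(1 + b²)) (note |ρ| < 1). Then ∫_ℝ Φ(a·x + m₁)·Φ(b·x + m₂) dγ(x) = (γ ⊗ γ){ (u, v) ∈ ℝ × ℝ : u ≤ h ∧ ρ·u + √(1 − ρ²)·v ≤ k }, i.e., it equals the standard bivariate normal probability BN(h, k | ρ) that a pair of standard Gaussian variables with correlation ρ lies in the quadrant (−∞, h] × (−∞, k]. -/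
open MeasureTheory ProbabilityTheory

/-- The standard normal CDF `Φ(t) = γ((−∞, t])`. -/
noncomputable def stdNormalCDF (t : ℝ) : ℝ := ((gaussianReal 0 1) (Set.Iic t)).toReal

/-!
For a jointly Gaussian pair `(X, Y)` and independent standard Gaussians `U`, `V`, Fubini gives
`E[Φ(X) Φ(Y)] = P(U - X ≤ 0, V - Y ≤ 0)`. The pair `(U - X, V - Y)` is again Gaussian: its mean is
`-(E X, E Y)`, its variances are `1 + Var X` and `1 + Var Y`, and its covariance is still
`cov(X, Y)`. A Gaussian pair is determined by these moments, so standardizing it by a Cholesky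
factorization of its covariance matrix turns the probability into a bivariate normal CDF.
-/

/-- The bivariate normal CDF `BN(h, k | ρ)`, for `|ρ| ≤ 1`: a standard Gaussian pair with
correlation `ρ` is realized as `(u, ρ u + √(1 - ρ²) v)` with `u`, `v` independent. Outside this
range `√(1 - ρ²)` is the junk value `0`. -/
noncomputable def stdBivariateNormalCDF (h k ρ : ℝ) : ℝ :=
  ((gaussianReal 0 1).prod (gaussianReal 0 1)).real
    {p | p.1 ≤ h ∧ ρ * p.1 + √(1 - ρ ^ 2) * p.2 ≤ k}

variable {Ω Ω' : Type*} [MeasurableSpace Ω] [MeasurableSpace Ω']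
  {P : Measure Ω} {P' : Measure Ω'} {X Y : Ω → ℝ} {X' Y' : Ω' → ℝ}

lemma covariance_const_mul_add_const_mul [IsFiniteMeasure P] (hX : MemLp X 2 P) (hY : MemLp Y 2 P)
    (a b c d : ℝ) :
    cov[fun ω ↦ a * X ω + b * Y ω, fun ω ↦ c * X ω + d * Y ω; P] =
      a * c * Var[X; P] + (a * d + b * c) * cov[X, Y; P] + b * d * Var[Y; P] := by
  have hcX := hX.const_mul c
  have hdY := hY.const_mul d
  change cov[(fun ω ↦ a * X ω) + fun ω ↦ b * Y ω, (fun ω ↦ c * X ω) + fun ω ↦ d * Y ω; P] = _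
  rw [covariance_add_left (hX.const_mul a) (hY.const_mul b) (hcX.add hdY),
    covariance_add_right (hX.const_mul a) hcX hdY, covariance_add_right (hY.const_mul b) hcX hdY]
  simp only [covariance_const_mul_left, covariance_const_mul_right,
    covariance_self hX.aemeasurable, covariance_self hY.aemeasurable, covariance_comm Y X]
  ring

lemma variance_const_mul_add_const_mul [IsFiniteMeasure P] (hX : MemLp X 2 P) (hY : MemLp Y 2 P)
    (a b : ℝ) :
    Var[fun ω ↦ a * X ω + b * Y ω; P] =
      a ^ 2 * Var[X; P] + 2 * a * b * cov[X, Y; P] + b ^ 2 * Var[Y; P] := by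
  have hmeas : AEMeasurable (fun ω ↦ a * X ω + b * Y ω) P :=
    (hX.aemeasurable.const_mul a).add (hY.aemeasurable.const_mul b)
  rw [← covariance_self hmeas, covariance_const_mul_add_const_mul hX hY]
  ring

lemma covariance_sq_le_variance_mul_variance [IsFiniteMeasure P]
    (hX : MemLp X 2 P) (hY : MemLp Y 2 P) : cov[X, Y; P] ^ 2 ≤ Var[X; P] * Var[Y; P] := by
  have hquad (t : ℝ) : 0 ≤ Var[X; P] * (t * t) + 2 * cov[X, Y; P] * t + Var[Y; P] := by
    have := variance_nonneg (fun ω ↦ t * X ω + 1 * Y ω) P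
    rw [variance_const_mul_add_const_mul hX hY] at this
    linarith
  have := discrim_le_zero hquad
  rw [discrim] at this
  linarith

lemma map_prodMk_eq_of_hasGaussianLaw (h : HasGaussianLaw (fun ω ↦ (X ω, Y ω)) P)
    (h' : HasGaussianLaw (fun ω ↦ (X' ω, Y' ω)) P') (hX : P[X] = P'[X']) (hY : P[Y] = P'[Y'])
    (hVX : Var[X; P] = Var[X'; P']) (hVY : Var[Y; P] = Var[Y'; P'])
    (hcov : cov[X, Y; P] = cov[X', Y'; P']) :
    P.map (fun ω ↦ (X ω, Y ω)) = P'.map (fun ω ↦ (X' ω, Y' ω)) := by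
  have := h.isProbabilityMeasure
  have := h'.isProbabilityMeasure
  have := h.isGaussian_map
  have := h'.isGaussian_map
  refine Measure.ext_of_charFunDual (funext fun L ↦ ?_)
  obtain ⟨s, t, hL⟩ : ∃ s t : ℝ, ∀ x y : ℝ, L (x, y) = s * x + t * y := by
    refine ⟨L (1, 0), L (0, 1), fun x y ↦ ?_⟩
    rw [mul_comm, mul_comm (L _), ← smul_eq_mul, ← smul_eq_mul, ← map_smul, ← map_smul, ← map_add]
    simp
  rw [h.charFunDual_map_eq_fun, h'.charFunDual_map_eq_fun]
  simp only [hL, variance_const_mul_add_const_mul h.fst.memLp_two h.snd.memLp_two,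
    variance_const_mul_add_const_mul h'.fst.memLp_two h'.snd.memLp_two,
    integral_add (h.fst.integrable.const_mul _) (h.snd.integrable.const_mul _),
    integral_add (h'.fst.integrable.const_mul _) (h'.snd.integrable.const_mul _),
    integral_const_mul, hX, hY, hVX, hVY, hcov]

lemma hasGaussianLaw_add_const {E : Type*} [NormedAddCommGroup E] [NormedSpace ℝ E]
    [MeasurableSpace E] [BorelSpace E] {Z : Ω → E} (hZ : HasGaussianLaw Z P) (c : E) :
    HasGaussianLaw (fun ω ↦ Z ω + c) P where
  isGaussian_map := by
    have := hZ.isGaussian_map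
    change IsGaussian (P.map ((fun z ↦ z + c) ∘ Z))
    rw [← AEMeasurable.map_map_of_aemeasurable (by fun_prop) hZ.aemeasurable]
    infer_instance

section ProdGaussianReal

variable (μ₁ μ₂ : ℝ) (v₁ v₂ : NNReal)

lemma memLp_fst_prod_gaussianReal :
    MemLp Prod.fst 2 ((gaussianReal μ₁ v₁).prod (gaussianReal μ₂ v₂)) :=
  (memLp_id_gaussianReal 2).comp_fst _

lemma integral_fst_prod_gaussianReal :
    ((gaussianReal μ₁ v₁).prod (gaussianReal μ₂ v₂))[Prod.fst] = μ₁ :=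
  measurePreserving_fst.hasLaw.integral_eq.trans integral_id_gaussianReal

lemma variance_fst_prod_gaussianReal :
    Var[Prod.fst; (gaussianReal μ₁ v₁).prod (gaussianReal μ₂ v₂)] = v₁ :=
  measurePreserving_fst.hasLaw.variance_eq.trans variance_id_gaussianReal

lemma memLp_snd_prod_gaussianReal :
    MemLp Prod.snd 2 ((gaussianReal μ₁ v₁).prod (gaussianReal μ₂ v₂)) :=
  (memLp_id_gaussianReal 2).comp_snd _

lemma integral_snd_prod_gaussianReal :
    ((gaussianReal μ₁ v₁).prod (gaussianReal μ₂ v₂))[Prod.snd] = μ₂ :=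
  measurePreserving_snd.hasLaw.integral_eq.trans integral_id_gaussianReal

lemma variance_snd_prod_gaussianReal :
    Var[Prod.snd; (gaussianReal μ₁ v₁).prod (gaussianReal μ₂ v₂)] = v₂ :=
  measurePreserving_snd.hasLaw.variance_eq.trans variance_id_gaussianReal

lemma covariance_fst_snd_prod_gaussianReal :
    cov[Prod.fst, Prod.snd; (gaussianReal μ₁ v₁).prod (gaussianReal μ₂ v₂)] = 0 :=
  covariance_fst_snd_prod (X := id) (Y := id) (memLp_id_gaussianReal 2) (memLp_id_gaussianReal 2)

variable (a b c d m n : ℝ)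

lemma integrable_linear_prod_gaussianReal :
    Integrable (fun p : ℝ × ℝ ↦ a * p.1 + b * p.2)
      ((gaussianReal μ₁ v₁).prod (gaussianReal μ₂ v₂)) :=
  (((memLp_fst_prod_gaussianReal μ₁ μ₂ v₁ v₂).const_mul a).add
    ((memLp_snd_prod_gaussianReal μ₁ μ₂ v₁ v₂).const_mul b)).integrable one_le_two

lemma integral_affine_prod_gaussianReal :
    ∫ p, a * p.1 + b * p.2 + m ∂(gaussianReal μ₁ v₁).prod (gaussianReal μ₂ v₂) =
      a * μ₁ + b * μ₂ + m := by
  have hu := (memLp_fst_prod_gaussianReal μ₁ μ₂ v₁ v₂).integrable one_le_two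
  have hv := (memLp_snd_prod_gaussianReal μ₁ μ₂ v₁ v₂).integrable one_le_two
  rw [integral_add (integrable_linear_prod_gaussianReal μ₁ μ₂ v₁ v₂ a b) (integrable_const m),
    integral_add (hu.const_mul a) (hv.const_mul b), integral_const_mul, integral_const_mul,
    integral_fst_prod_gaussianReal, integral_snd_prod_gaussianReal, integral_const, probReal_univ,
    one_smul]

lemma covariance_affine_prod_gaussianReal :
    cov[fun p ↦ a * p.1 + b * p.2 + m, fun p ↦ c * p.1 + d * p.2 + n;
      (gaussianReal μ₁ v₁).prod (gaussianReal μ₂ v₂)] = a * c * v₁ + b * d * v₂ := by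
  rw [covariance_add_const_left (integrable_linear_prod_gaussianReal μ₁ μ₂ v₁ v₂ a b),
    covariance_add_const_right (integrable_linear_prod_gaussianReal μ₁ μ₂ v₁ v₂ c d),
    covariance_const_mul_add_const_mul (memLp_fst_prod_gaussianReal μ₁ μ₂ v₁ v₂)
      (memLp_snd_prod_gaussianReal μ₁ μ₂ v₁ v₂), variance_fst_prod_gaussianReal,
    covariance_fst_snd_prod_gaussianReal, variance_snd_prod_gaussianReal, mul_zero, add_zero]

lemma variance_affine_prod_gaussianReal :
    Var[fun p ↦ a * p.1 + b * p.2 + m; (gaussianReal μ₁ v₁).prod (gaussianReal μ₂ v₂)] =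
      a ^ 2 * v₁ + b ^ 2 * v₂ := by
  rw [← covariance_self (by fun_prop), covariance_affine_prod_gaussianReal, ← sq, ← sq]

lemma hasGaussianLaw_affine_prod_gaussianReal :
    HasGaussianLaw (fun p : ℝ × ℝ ↦ (a * p.1 + b * p.2 + m, c * p.1 + d * p.2 + n))
      ((gaussianReal μ₁ v₁).prod (gaussianReal μ₂ v₂)) :=
  let u := ContinuousLinearMap.fst ℝ ℝ ℝ
  let v := ContinuousLinearMap.snd ℝ ℝ ℝ
  hasGaussianLaw_add_const
    (IsGaussian.hasGaussianLaw_id.map_fun ((a • u + b • v).prod (c • u + d • v))) (m, n)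

end ProdGaussianReal

lemma map_prodMk_eq_map_prod_gaussianReal (h : HasGaussianLaw (fun ω ↦ (X ω, Y ω)) P)
    {a b c d : ℝ} (hVX : Var[X; P] = a ^ 2 + b ^ 2) (hVY : Var[Y; P] = c ^ 2 + d ^ 2)
    (hcov : cov[X, Y; P] = a * c + b * d) :
    P.map (fun ω ↦ (X ω, Y ω)) =
      ((gaussianReal 0 1).prod (gaussianReal 0 1)).map fun p ↦
        (a * p.1 + b * p.2 + P[X], c * p.1 + d * p.2 + P[Y]) := by
  apply map_prodMk_eq_of_hasGaussianLaw h (hasGaussianLaw_affine_prod_gaussianReal ..) <;>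
    simp only [integral_affine_prod_gaussianReal, variance_affine_prod_gaussianReal,
      covariance_affine_prod_gaussianReal, hVX, hVY, hcov, NNReal.coe_one, mul_zero, mul_one,
      add_zero, zero_add]

lemma measureReal_le_and_le_eq_stdBivariateNormalCDF
    (h : HasGaussianLaw (fun ω ↦ (X ω, Y ω)) P) (hVX : 0 < Var[X; P]) (hVY : 0 < Var[Y; P])
    (x y : ℝ) :
    P.real {ω | X ω ≤ x ∧ Y ω ≤ y} =
      stdBivariateNormalCDF ((x - P[X]) / √Var[X; P]) ((y - P[Y]) / √Var[Y; P])
        (cov[X, Y; P] / (√Var[X; P] * √Var[Y; P])) := by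
  have := h.isProbabilityMeasure
  set ρ := cov[X, Y; P] / (√Var[X; P] * √Var[Y; P]) with hρ
  have hσX : 0 < √Var[X; P] := Real.sqrt_pos.2 hVX
  have hσY : 0 < √Var[Y; P] := Real.sqrt_pos.2 hVY
  have hρ_sq : ρ ^ 2 ≤ 1 := by
    rw [hρ, div_pow, mul_pow, Real.sq_sqrt hVX.le, Real.sq_sqrt hVY.le, div_le_one (by positivity)]
    exact covariance_sq_le_variance_mul_variance h.fst.memLp_two h.snd.memLp_two
  have hmap := map_prodMk_eq_map_prod_gaussianReal h (a := √Var[X; P]) (b := 0)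
    (c := √Var[Y; P] * ρ) (d := √Var[Y; P] * √(1 - ρ ^ 2)) (by simp [hVX.le])
    (by rw [mul_pow, mul_pow, Real.sq_sqrt hVY.le, Real.sq_sqrt (sub_nonneg.2 hρ_sq)]; ring)
    (by rw [hρ]; field_simp; ring)
  have hquadrant : MeasurableSet {p : ℝ × ℝ | p.1 ≤ x ∧ p.2 ≤ y} :=
    (measurableSet_le measurable_fst measurable_const).inter
      (measurableSet_le measurable_snd measurable_const)
  calc
    P.real {ω | X ω ≤ x ∧ Y ω ≤ y}
      = (P.map fun ω ↦ (X ω, Y ω)).real {p | p.1 ≤ x ∧ p.2 ≤ y} :=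
        (map_measureReal_apply_of_aemeasurable h.aemeasurable hquadrant).symm
    _ = stdBivariateNormalCDF ((x - P[X]) / √Var[X; P]) ((y - P[Y]) / √Var[Y; P]) ρ := by
        rw [hmap, map_measureReal_apply (by fun_prop) hquadrant, stdBivariateNormalCDF]
        congr 1
        ext p
        simp only [Set.mem_preimage, Set.mem_ofPred_eq, le_div_iff₀ hσX, le_div_iff₀ hσY,
          le_sub_iff_add_le]
        ring_nf

lemma integral_measureReal_Iic_mul {μ ν : Measure ℝ} [IsFiniteMeasure P] [IsFiniteMeasure μ]
    [IsFiniteMeasure ν] (hX : AEMeasurable X P) (hY : AEMeasurable Y P) :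
    ∫ ω, μ.real (Set.Iic (X ω)) * ν.real (Set.Iic (Y ω)) ∂P =
      (P.prod (μ.prod ν)).real {q | q.2.1 ≤ X q.1 ∧ q.2.2 ≤ Y q.1} := by
  set s : Set (Ω × ℝ × ℝ) := {q | q.2.1 ≤ X q.1 ∧ q.2.2 ≤ Y q.1}
  have hs : NullMeasurableSet s (P.prod (μ.prod ν)) :=
    (nullMeasurableSet_le (by fun_prop) hX.comp_fst).inter
      (nullMeasurableSet_le (by fun_prop) hY.comp_fst)
  calc
    ∫ ω, μ.real (Set.Iic (X ω)) * ν.real (Set.Iic (Y ω)) ∂P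
      = ∫ ω, ∫ r, s.indicator 1 (ω, r) ∂(μ.prod ν) ∂P := by
        congr with ω
        have hsec : MeasurableSet (Set.Iic (X ω) ×ˢ Set.Iic (Y ω)) :=
          measurableSet_Iic.prod measurableSet_Iic
        rw [← measureReal_prod_prod, ← integral_indicator_one hsec]
        rfl
    _ = ∫ q, s.indicator 1 q ∂(P.prod (μ.prod ν)) :=
        (integral_prod _ ((integrable_const 1).indicator₀ hs)).symm
    _ = (P.prod (μ.prod ν)).real s := by
        rw [integral_indicator₀ hs]
        simp

lemma covariance_snd_sub_fst_prod {R : Measure Ω'} [IsProbabilityMeasure P]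
    [IsProbabilityMeasure R] {U V : Ω' → ℝ} (hX : MemLp X 2 P) (hY : MemLp Y 2 P)
    (hU : MemLp U 2 R) (hV : MemLp V 2 R) :
    cov[fun q ↦ U q.2 - X q.1, fun q ↦ V q.2 - Y q.1; P.prod R] =
      cov[X, Y; P] + cov[U, V; R] := by
  have hfst : HasLaw Prod.fst P (P.prod R) := measurePreserving_fst.hasLaw
  have hsnd : HasLaw Prod.snd R (P.prod R) := measurePreserving_snd.hasLaw
  rw [covariance_fun_sub_fun_sub (hU.comp_snd P) (hX.comp_fst R) (hV.comp_snd P) (hY.comp_fst R),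
    covariance_comm (fun q : Ω × Ω' ↦ U q.2) (fun q ↦ Y q.1), covariance_fst_snd_prod hX hV,
    covariance_fst_snd_prod hY hU, hfst.covariance_fun_comp hX.aemeasurable hY.aemeasurable,
    hsnd.covariance_fun_comp hU.aemeasurable hV.aemeasurable]
  ring

lemma variance_snd_sub_fst_prod {R : Measure Ω'} [IsProbabilityMeasure P]
    [IsProbabilityMeasure R] {U : Ω' → ℝ} (hX : MemLp X 2 P) (hU : MemLp U 2 R) :
    Var[fun q ↦ U q.2 - X q.1; P.prod R] = Var[X; P] + Var[U; R] := by
  have hmeas : AEMeasurable (fun q ↦ U q.2 - X q.1) (P.prod R) :=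
    ((hU.comp_snd P).sub (hX.comp_fst R)).aemeasurable
  rw [← covariance_self hmeas,
    covariance_snd_sub_fst_prod hX hX hU hU, covariance_self hX.aemeasurable,
    covariance_self hU.aemeasurable]

lemma integral_snd_sub_fst_prod {R : Measure Ω'} [IsProbabilityMeasure P]
    [IsProbabilityMeasure R] {U : Ω' → ℝ} (hX : Integrable X P) (hU : Integrable U R) :
    ∫ q, U q.2 - X q.1 ∂P.prod R = R[U] - P[X] := by
  rw [integral_sub (hU.comp_snd P) (hX.comp_fst R), integral_fun_fst, integral_fun_snd]
  simp

lemma hasGaussianLaw_snd_sub_fst_prod {E : Type*} [NormedAddCommGroup E] [NormedSpace ℝ E]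
    [MeasurableSpace E] [BorelSpace E] [CompleteSpace E] [SecondCountableTopology E]
    {R : Measure Ω'} {Z : Ω → E} {W : Ω' → E}
    (hZ : HasGaussianLaw Z P) (hW : HasGaussianLaw W R) :
    HasGaussianLaw (fun q ↦ W q.2 - Z q.1) (P.prod R) := by
  have := hZ.isProbabilityMeasure
  have := hW.isProbabilityMeasure
  have hZ' : HasGaussianLaw (fun q : Ω × Ω' ↦ Z q.1) (P.prod R) :=
    have := hZ.isGaussian_map
    ((HasLaw.mk hZ.aemeasurable rfl).comp measurePreserving_fst.hasLaw).hasGaussianLaw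
  have hW' : HasGaussianLaw (fun q : Ω × Ω' ↦ W q.2) (P.prod R) :=
    have := hW.isGaussian_map
    ((HasLaw.mk hW.aemeasurable rfl).comp measurePreserving_snd.hasLaw).hasGaussianLaw
  have hind : IndepFun (fun q : Ω × Ω' ↦ W q.2) (fun q ↦ Z q.1) (P.prod R) :=
    (indepFun_prod₀ hZ.aemeasurable hW.aemeasurable).symm
  exact (hind.hasGaussianLaw hW' hZ').fun_sub

section AffineGaussianReal

lemma hasGaussianLaw_affine (hX : HasGaussianLaw X P) (a b m n : ℝ) :
    HasGaussianLaw (fun ω ↦ (a * X ω + m, b * X ω + n)) P :=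
  let x := ContinuousLinearMap.id ℝ ℝ
  hasGaussianLaw_add_const (hX.map_fun ((a • x).prod (b • x))) (m, n)

variable (μ : ℝ) (v : NNReal) (a b m n : ℝ)

lemma integrable_const_mul_gaussianReal : Integrable (fun x ↦ a * x) (gaussianReal μ v) :=
  ((memLp_id_gaussianReal 1).const_mul a).integrable le_rfl

lemma integral_affine_gaussianReal : ∫ x, a * x + m ∂gaussianReal μ v = a * μ + m := by
  rw [integral_add (integrable_const_mul_gaussianReal μ v a) (integrable_const m),
    integral_const_mul, integral_id_gaussianReal, integral_const, probReal_univ, one_smul]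

lemma variance_affine_gaussianReal : Var[fun x ↦ a * x + m; gaussianReal μ v] = a ^ 2 * v := by
  rw [variance_add_const (integrable_const_mul_gaussianReal μ v a).aestronglyMeasurable,
    variance_const_mul, variance_fun_id_gaussianReal]

lemma covariance_affine_gaussianReal :
    cov[fun x ↦ a * x + m, fun x ↦ b * x + n; gaussianReal μ v] = a * b * v := by
  rw [covariance_add_const_left (integrable_const_mul_gaussianReal μ v a),
    covariance_add_const_right (integrable_const_mul_gaussianReal μ v b),
    covariance_const_mul_left, covariance_const_mul_right, covariance_self (by fun_prop),
    variance_fun_id_gaussianReal, mul_assoc]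

end AffineGaussianReal

theorem integral_stdNormalCDF_mul_general (h : HasGaussianLaw (fun ω ↦ (X ω, Y ω)) P) :
    ∫ ω, stdNormalCDF (X ω) * stdNormalCDF (Y ω) ∂P =
      stdBivariateNormalCDF (P[X] / √(1 + Var[X; P])) (P[Y] / √(1 + Var[Y; P]))
        (cov[X, Y; P] / (√(1 + Var[X; P]) * √(1 + Var[Y; P]))) := by
  have := h.isProbabilityMeasure
  set γ := gaussianReal 0 1
  have hu : MemLp Prod.fst 2 (γ.prod γ) := memLp_fst_prod_gaussianReal 0 0 1 1
  have hv : MemLp Prod.snd 2 (γ.prod γ) := memLp_snd_prod_gaussianReal 0 0 1 1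
  have hX := h.fst.memLp_two
  have hY := h.snd.memLp_two
  have hdiff : HasGaussianLaw (fun q : Ω × ℝ × ℝ ↦ (q.2.1 - X q.1, q.2.2 - Y q.1))
      (P.prod (γ.prod γ)) :=
    hasGaussianLaw_snd_sub_fst_prod h IsGaussian.hasGaussianLaw_id
  have hEX : ∫ q, q.2.1 - X q.1 ∂P.prod (γ.prod γ) = -P[X] := by
    rw [integral_snd_sub_fst_prod h.fst.integrable (hu.integrable one_le_two),
      integral_fst_prod_gaussianReal, zero_sub]
  have hEY : ∫ q, q.2.2 - Y q.1 ∂P.prod (γ.prod γ) = -P[Y] := by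
    rw [integral_snd_sub_fst_prod h.snd.integrable (hv.integrable one_le_two),
      integral_snd_prod_gaussianReal, zero_sub]
  have hVX : Var[fun q ↦ q.2.1 - X q.1; P.prod (γ.prod γ)] = 1 + Var[X; P] := by
    rw [variance_snd_sub_fst_prod hX hu, variance_fst_prod_gaussianReal, NNReal.coe_one, add_comm]
  have hVY : Var[fun q ↦ q.2.2 - Y q.1; P.prod (γ.prod γ)] = 1 + Var[Y; P] := by
    rw [variance_snd_sub_fst_prod hY hv, variance_snd_prod_gaussianReal, NNReal.coe_one, add_comm]
  have hcov : cov[fun q ↦ q.2.1 - X q.1, fun q ↦ q.2.2 - Y q.1; P.prod (γ.prod γ)] =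
      cov[X, Y; P] := by
    rw [covariance_snd_sub_fst_prod hX hY hu hv, covariance_fst_snd_prod_gaussianReal, add_zero]
  calc
    ∫ ω, stdNormalCDF (X ω) * stdNormalCDF (Y ω) ∂P
      = (P.prod (γ.prod γ)).real {q | q.2.1 ≤ X q.1 ∧ q.2.2 ≤ Y q.1} :=
        integral_measureReal_Iic_mul h.fst.aemeasurable h.snd.aemeasurable
    _ = (P.prod (γ.prod γ)).real {q | q.2.1 - X q.1 ≤ 0 ∧ q.2.2 - Y q.1 ≤ 0} := by
        simp only [sub_nonpos]
    _ = _ := by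
        rw [measureReal_le_and_le_eq_stdBivariateNormalCDF hdiff
          (hVX ▸ add_pos_of_pos_of_nonneg one_pos (variance_nonneg X P))
          (hVY ▸ add_pos_of_pos_of_nonneg one_pos (variance_nonneg Y P)),
          hEX, hEY, hVX, hVY, hcov, zero_sub, zero_sub, neg_neg, neg_neg]

/-- Theorem E.4 (Probit critic processes), via Owen's identities 10,010.8 and
20,010.3: `∫ Φ(a·x+m₁)·Φ(b·x+m₂) dγ(x) = BN(h, k | ρ)`, the standard bivariate
normal probability with correlation `ρ` of the quadrant `(−∞,h] × (−∞,k]`,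
where `h = m₁/√(1+a²)`, `k = m₂/√(1+b²)`,
`ρ = a·b/(√(1+a²)·√(1+b²))`; the pair `(u, ρ·u + √(1−ρ²)·v)` for independent
standard Gaussians `(u, v)` is standard bivariate normal with correlation `ρ`. -/
theorem integral_stdNormalCDF_mul (a b m₁ m₂ h k ρ : ℝ)
    (hh : h = m₁ / Real.sqrt (1 + a ^ 2))
    (hk : k = m₂ / Real.sqrt (1 + b ^ 2))
    (hρ : ρ = a * b / (Real.sqrt (1 + a ^ 2) * Real.sqrt (1 + b ^ 2))) :
    ∫ x, stdNormalCDF (a * x + m₁) * stdNormalCDF (b * x + m₂) ∂(gaussianReal 0 1) =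
      (((gaussianReal 0 1).prod (gaussianReal 0 1))
        {p : ℝ × ℝ | p.1 ≤ h ∧ ρ * p.1 + Real.sqrt (1 - ρ ^ 2) * p.2 ≤ k}).toReal := by
  subst hh hk hρ
  have hid : HasGaussianLaw id (gaussianReal 0 1) := IsGaussian.hasGaussianLaw_id
  simpa only [id_eq, integral_affine_gaussianReal, variance_affine_gaussianReal,
    covariance_affine_gaussianReal, mul_zero, zero_add, NNReal.coe_one, mul_one] using!
    integral_stdNormalCDF_mul_general (hasGaussianLaw_affine hid a b m₁ m₂)
end
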